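/- Let Φ be a unital positive linear map from n×n to m×m complex matrices, let g : ℝ → ℝ be operator monotone decreasing on (0,∞), and let A, B be n×n complex matrices with m·I ≤ A ≤ M·I and m·I ≤ B ≤ M·I for some scalars 0 < m < M. Then Φ(g(A ! B)) − (Φ(g(A)) + Φ(g(B)))/2 ≤ ((M−m)²/(4Mm))·g(m)·I. -/

import Mathlib

open Matrix ComplexOrder

/-- Loewner order: `A ≤ B` iff `B - A` is positive semidefinite. -/
def LoewnerLE {n : Type} [Fintype n] (A B : Matrix n n ℂ) : Prop := (B - A).PosSemidef

/-- The positive square root of a (Hermitian) matrix, via the continuous functional calculus. -/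
noncomputable def msqrt {n : Type} [Fintype n] [DecidableEq n] (A : Matrix n n ℂ) :
    Matrix n n ℂ := cfc Real.sqrt A

/-- The arithmetic mean `A ∇ B = (A + B)/2`. -/
noncomputable def amean {n : Type} [Fintype n] [DecidableEq n] (A B : Matrix n n ℂ) :
    Matrix n n ℂ := (2 : ℝ)⁻¹ • (A + B)

/-- The harmonic mean `A ! B = ((A⁻¹ + B⁻¹)/2)⁻¹`. -/
noncomputable def hmean {n : Type} [Fintype n] [DecidableEq n] (A B : Matrix n n ℂ) :
    Matrix n n ℂ := ((2 : ℝ)⁻¹ • (A⁻¹ + B⁻¹))⁻¹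

/-- The geometric mean `A ♯ B = A^(1/2) (A^(-1/2) B A^(-1/2))^(1/2) A^(1/2)`. -/
noncomputable def gmean {n : Type} [Fintype n] [DecidableEq n] (A B : Matrix n n ℂ) :
    Matrix n n ℂ := msqrt A * msqrt ((msqrt A)⁻¹ * B * (msqrt A)⁻¹) * msqrt A

/-- `f : ℝ → ℝ` is operator monotone on `[0,∞)`: it is continuous and nonnegative on `[0,∞)`
and monotone on positive-semidefinite complex matrices of every finite size, with `f` applied
via the continuous functional calculus. -/
def OpMonotone (f : ℝ → ℝ) : Prop :=
  ContinuousOn f (Set.Ici 0) ∧ (∀ x : ℝ, 0 ≤ x → 0 ≤ f x) ∧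
    ∀ (k : Type) [Fintype k] [DecidableEq k] (X Y : Matrix k k ℂ),
      X.PosSemidef → LoewnerLE X Y → LoewnerLE (cfc f X) (cfc f Y)

/-- `g : ℝ → ℝ` is operator monotone decreasing on `(0,∞)`: it is continuous and nonnegative on
`(0,∞)` and antitone on positive-definite complex matrices of every finite size, with `g` applied
via the continuous functional calculus. -/
def OpAntitone (g : ℝ → ℝ) : Prop :=
  ContinuousOn g (Set.Ioi 0) ∧ (∀ x : ℝ, 0 < x → 0 ≤ g x) ∧
    ∀ (k : Type) [Fintype k] [DecidableEq k] (X Y : Matrix k k ℂ),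
      X.PosDef → Y.PosDef → LoewnerLE X Y → LoewnerLE (cfc g Y) (cfc g X)


/-!
Write `H = A ! B`, `N = (A + B) / 2` and `K = (M + m)² / (4 M m)`. The chain of inequalities is
`g(H) ≤ g(K⁻¹ N) ≤ K g(N) ≤ K (g(A) + g(B)) / 2`; since `K - 1 = (M - m)² / (4 M m)` and `g` is
at most `g(m)` on `[m, ∞)`, applying `Φ` gives the theorem.

The first step is Kantorovich's bound `N ≤ K H`. It follows from `x + M m / x ≤ M + m` on `[m, M]`,
applied to `A` and `B`, and `M + m ≤ K x + M m / x` on `(0, ∞)`, applied to `H`, because `H⁻¹` is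
the mean of `A⁻¹` and `B⁻¹`.

The other two steps come from one compression inequality: `g(T₁₁) ⊕ 0 ≤ g(T)` for a positive
definite block matrix `T`. Indeed `T ≤ (1 + r²) T₁₁ ⊕ (1 + r⁻²) T₂₂`, so `g(T)` dominates
`g((1 + r²) T₁₁) ⊕ 0`, and `r → 0`. Let `T = U (A ⊕ B) U*` for a rotation `U`, so that `T₁₁` is the
convex combination `a A + b B`. The upper left block of the inequality says that `g` is operator
convex; conjugating back by `U` first, it says `a g(a A + b B) ≤ g(A)`. Taking `B` proportional to
`A`, this becomes `s g(s A) ≤ g(A)` for `0 < s ≤ 1`.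
-/

section

open Filter Polynomial Topology
open scoped MatrixOrder

section FunctionalCalculus

variable {k : Type*} [Fintype k] [DecidableEq k]

theorem spectrum_real_subset_Ioi_of_posDef {X : Matrix k k ℂ} (hX : X.PosDef) :
    spectrum ℝ X ⊆ Set.Ioi 0 :=
  fun _ hx => (isStrictlyPositive_iff_posDef.2 hX).spectrum_pos hx

theorem cfc_eq_aeval_of_eqOn {X : Matrix k k ℂ} (hX : X.IsHermitian) {f : ℝ → ℝ}
    {p : ℝ[X]} (h : Set.EqOn f p.eval (spectrum ℝ X)) : cfc f X = aeval X p :=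
  (cfc_congr h).trans (cfc_polynomial p X hX)

theorem cfc_unitary_conjugate {X U : Matrix k k ℂ} (hX : X.IsHermitian)
    (hU : U ∈ unitary (Matrix k k ℂ)) (f : ℝ → ℝ) :
    cfc f (U * X * star U) = U * cfc f X * star U := by
  have hcont : Continuous (Unitary.conjStarAlgAut ℝ (Matrix k k ℂ) ⟨U, hU⟩) := by
    change Continuous fun Y : Matrix k k ℂ => U * Y * star U
    fun_prop
  exact (StarAlgHomClass.map_cfc (Unitary.conjStarAlgAut ℝ (Matrix k k ℂ) ⟨U, hU⟩) f X
    (X.finite_real_spectrum.continuousOn f) hcont hX (hX.isSelfAdjoint.map _)).symm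

theorem continuousOn_cfc_smul {g : ℝ → ℝ} (hg : ContinuousOn g (Set.Ioi 0)) {X : Matrix k k ℂ}
    (hX : X.PosDef) : ContinuousOn (fun s : ℝ => cfc g (s • X)) (Set.Ioi 0) := by
  have hpos (s : ℝ) (hs : 0 < s) : (s • X).PosDef := hX.smul hs
  have hnhds : Set.Ioi (0 : ℝ) ∈ 𝓝ˢ (⋃ s ∈ Set.Ioi (0 : ℝ), spectrum ℝ (s • X)) :=
    isOpen_Ioi.mem_nhdsSet.2 <|
      Set.iUnion₂_subset fun s hs => spectrum_real_subset_Ioi_of_posDef (hpos s hs)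
  open scoped Matrix.Norms.L2Operator in
  exact ContinuousOn.cfc_of_mem_nhdsSet g hnhds (by fun_prop)
    (fun s hs => (hpos s hs).isHermitian) hg

theorem orderClosedTopology_matrix {k : Type*} [Finite k] :
    OrderClosedTopology (Matrix k k ℂ) := by
  classical
  have := Fintype.ofFinite k
  open scoped Matrix.Norms.L2Operator in
  infer_instance

end FunctionalCalculus

section BlockDiagonal

variable {k l : Type*}

theorem toBlocks₁₁_mono {X Y : Matrix (k ⊕ l) (k ⊕ l) ℂ} (h : X ≤ Y) :
    X.toBlocks₁₁ ≤ Y.toBlocks₁₁ :=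
  PosSemidef.submatrix h Sum.inl

section Finite

variable [Finite k] [Finite l]

theorem posSemidef_fromBlocks_zero_zero {A : Matrix k k ℂ} {B : Matrix l l ℂ}
    (hA : A.PosSemidef) (hB : B.PosSemidef) : (fromBlocks A 0 0 B).PosSemidef := by
  have := Fintype.ofFinite k
  have := Fintype.ofFinite l
  refine .of_dotProduct_mulVec_nonneg
    (hA.isHermitian.fromBlocks conjTranspose_zero hB.isHermitian) fun x => ?_
  rw [fromBlocks_mulVec, ← Sum.elim_comp_inl_inr (star x), sumElim_dotProduct_sumElim]
  simp only [zero_mulVec, add_zero, zero_add]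
  exact add_nonneg (hA.dotProduct_mulVec_nonneg (x ∘ Sum.inl))
    (hB.dotProduct_mulVec_nonneg (x ∘ Sum.inr))

theorem fromBlocks_zero_le_fromBlocks {A : Matrix k k ℂ} {B : Matrix l l ℂ} (hB : 0 ≤ B) :
    fromBlocks A 0 0 0 ≤ fromBlocks A 0 0 B := by
  have h := posSemidef_fromBlocks_zero_zero (k := k) .zero (nonneg_iff_posSemidef.1 hB)
  simpa [fromBlocks_add] using
    add_le_add_right (nonneg_iff_posSemidef.2 h) (fromBlocks A 0 0 (0 : Matrix l l ℂ))

theorem posDef_fromBlocks_zero_zero {A : Matrix k k ℂ} {B : Matrix l l ℂ} (hA : A.PosDef)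
    (hB : B.PosDef) : (fromBlocks A 0 0 B).PosDef := by
  classical
  have := Fintype.ofFinite k
  have := Fintype.ofFinite l
  exact (posSemidef_fromBlocks_zero_zero hA.posSemidef hB.posSemidef).posDef_iff_isUnit.2
    (isUnit_fromBlocks_zero₂₁.2 ⟨hA.isUnit, hB.isUnit⟩)

theorem le_fromBlocks_smul_toBlocks {T : Matrix (k ⊕ l) (k ⊕ l) ℂ} (hT : T.PosSemidef) {r : ℝ}
    (hr : r ≠ 0) :
    T ≤ fromBlocks ((1 + r ^ 2) • T.toBlocks₁₁) 0 0 ((1 + (r ^ 2)⁻¹) • T.toBlocks₂₂) := by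
  classical
  have := Fintype.ofFinite k
  have := Fintype.ofFinite l
  let D : Matrix (k ⊕ l) (k ⊕ l) ℂ := fromBlocks (r • 1) 0 0 (-(r⁻¹ • 1))
  have hD : D * T * Dᴴ = fromBlocks ((1 + r ^ 2) • T.toBlocks₁₁) 0 0
      ((1 + (r ^ 2)⁻¹) • T.toBlocks₂₂) - T := by
    rw [eq_sub_iff_add_eq, ← fromBlocks_toBlocks T]
    simp [D, fromBlocks_conjTranspose, fromBlocks_multiply, fromBlocks_add, smul_smul, hr,
      add_smul, sq, add_comm]
  rw [Matrix.le_iff, ← hD]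
  exact hT.mul_mul_conjTranspose_same D

end Finite

variable [Fintype k] [DecidableEq k] [Fintype l] [DecidableEq l]

variable (k l) in
/-- The block diagonal embedding of pairs of matrices, as a homomorphism of real algebras so that
it commutes with real polynomials and hence with the functional calculus. -/
noncomputable def blockDiagAlgHom :
    Matrix k k ℂ × Matrix l l ℂ →ₐ[ℝ] Matrix (k ⊕ l) (k ⊕ l) ℂ where
  toFun X := fromBlocks X.1 0 0 X.2
  map_one' := fromBlocks_one
  map_mul' X Y := by simp [fromBlocks_multiply]
  map_zero' := fromBlocks_zero
  map_add' X Y := by simp [fromBlocks_add]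
  commutes' r := by simp [Algebra.algebraMap_eq_smul_one, ← fromBlocks_one, fromBlocks_smul]

theorem cfc_fromBlocks_zero_zero {A : Matrix k k ℂ} {B : Matrix l l ℂ} (hA : A.IsHermitian)
    (hB : B.IsHermitian) (f : ℝ → ℝ) :
    cfc f (fromBlocks A 0 0 B) = fromBlocks (cfc f A) 0 0 (cfc f B) := by
  have hfin : (spectrum ℝ A ∪ spectrum ℝ B).Finite :=
    A.finite_real_spectrum.union B.finite_real_spectrum
  obtain ⟨p, hp⟩ : ∃ p : ℝ[X], Set.EqOn f p.eval (spectrum ℝ A ∪ spectrum ℝ B) :=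
    ⟨Lagrange.interpolate hfin.toFinset id f, fun x hx =>
      (Lagrange.eval_interpolate_at_node f Function.injective_id.injOn
        (hfin.mem_toFinset.2 hx)).symm⟩
  have hspec : spectrum ℝ (blockDiagAlgHom k l (A, B)) ⊆ spectrum ℝ A ∪ spectrum ℝ B :=
    Prod.spectrum_eq (R := ℝ) A B ▸ AlgHom.spectrum_apply_subset (blockDiagAlgHom k l) (A, B)
  calc cfc f (blockDiagAlgHom k l (A, B))
      = aeval (blockDiagAlgHom k l (A, B)) p :=
        cfc_eq_aeval_of_eqOn (hA.fromBlocks conjTranspose_zero hB) (hp.mono hspec)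
    _ = blockDiagAlgHom k l (aeval A p, aeval B p) := by
        rw [aeval_algHom_apply, aeval_prod_apply]
    _ = blockDiagAlgHom k l (cfc f A, cfc f B) := by
        rw [cfc_eq_aeval_of_eqOn hA (hp.mono Set.subset_union_left),
          cfc_eq_aeval_of_eqOn hB (hp.mono Set.subset_union_right)]

end BlockDiagonal

section Rotation

variable {k : Type*} [DecidableEq k]

variable (k) in
/-- The plane rotation with cosine `c` and sine `s`, acting on `ℂᵏ ⊕ ℂᵏ`. Conjugation by it puts
a convex combination of the two blocks of a block diagonal matrix into the upper left corner.
The relation `c ^ 2 + s ^ 2 = 1` is not built in. -/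
noncomputable def blockRotation (c s : ℝ) : Matrix (k ⊕ k) (k ⊕ k) ℂ :=
  fromBlocks (c • 1) (s • 1) (-(s • 1)) (c • 1)

theorem star_blockRotation (c s : ℝ) : star (blockRotation k c s) = blockRotation k c (-s) := by
  simp [blockRotation, star_eq_conjTranspose, fromBlocks_conjTranspose]

variable [Fintype k]

theorem blockRotation_mem_unitary {c s : ℝ} (h : c ^ 2 + s ^ 2 = 1) :
    blockRotation k c s ∈ unitary (Matrix (k ⊕ k) (k ⊕ k) ℂ) := by
  have hcs : (c * c + s * s) • (1 : Matrix k k ℂ) = 1 := by rw [← sq, ← sq, h, one_smul]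
  rw [Unitary.mem_iff, star_blockRotation]
  constructor <;>
    simp [blockRotation, fromBlocks_multiply, smul_smul, ← add_smul, mul_comm s c, hcs,
      add_comm (s * s)]

theorem toBlocks₁₁_blockRotation_conjugate (c s : ℝ) (X Y : Matrix k k ℂ) :
    (blockRotation k c s * fromBlocks X 0 0 Y * star (blockRotation k c s)).toBlocks₁₁ =
      c ^ 2 • X + s ^ 2 • Y := by
  rw [star_blockRotation]
  simp [blockRotation, fromBlocks_multiply, smul_smul, sq]

end Rotation

section OpAntitone

variable {k l : Type} [Fintype k] [DecidableEq k] [Fintype l] [DecidableEq l] {g : ℝ → ℝ}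

theorem OpAntitone.cfc_le_cfc (hg : OpAntitone g) {X Y : Matrix k k ℂ} (hX : X.PosDef)
    (h : X ≤ Y) : cfc g Y ≤ cfc g X :=
  hg.2.2 k X Y hX (add_sub_cancel X Y ▸ hX.add_posSemidef h) h

theorem OpAntitone.cfc_nonneg (hg : OpAntitone g) {X : Matrix k k ℂ} (hX : X.PosDef) :
    0 ≤ cfc g X :=
  _root_.cfc_nonneg fun x hx => hg.2.1 x (spectrum_real_subset_Ioi_of_posDef hX hx)

theorem OpAntitone.cfc_le_smul_one (hg : OpAntitone g) {m : ℝ} (hm : 0 < m) {X : Matrix k k ℂ}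
    (h : m • (1 : Matrix k k ℂ) ≤ X) : cfc g X ≤ g m • (1 : Matrix k k ℂ) := by
  simpa only [← Algebra.algebraMap_eq_smul_one, cfc_algebraMap] using
    hg.cfc_le_cfc (PosDef.one.smul hm) h

theorem OpAntitone.fromBlocks_cfc_toBlocks₁₁_le (hg : OpAntitone g)
    {T : Matrix (k ⊕ l) (k ⊕ l) ℂ} (hT : T.PosDef) :
    fromBlocks (cfc g T.toBlocks₁₁) 0 0 0 ≤ cfc g T := by
  have hT₁ : T.toBlocks₁₁.PosDef := hT.submatrix Sum.inl_injective
  have hT₂ : T.toBlocks₂₂.PosDef := hT.submatrix Sum.inr_injective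
  have hbound (r : ℝ) (hr : r ≠ 0) :
      fromBlocks (cfc g ((1 + r ^ 2) • T.toBlocks₁₁)) 0 0 0 ≤ cfc g T := by
    have h₁ : ((1 + r ^ 2) • T.toBlocks₁₁).PosDef := hT₁.smul (by positivity)
    have h₂ : ((1 + (r ^ 2)⁻¹) • T.toBlocks₂₂).PosDef := hT₂.smul (by positivity)
    calc fromBlocks (cfc g ((1 + r ^ 2) • T.toBlocks₁₁)) 0 0 0
        ≤ fromBlocks (cfc g ((1 + r ^ 2) • T.toBlocks₁₁)) 0 0
            (cfc g ((1 + (r ^ 2)⁻¹) • T.toBlocks₂₂)) :=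
          fromBlocks_zero_le_fromBlocks (hg.cfc_nonneg h₂)
      _ = cfc g (fromBlocks ((1 + r ^ 2) • T.toBlocks₁₁) 0 0
            ((1 + (r ^ 2)⁻¹) • T.toBlocks₂₂)) :=
          (cfc_fromBlocks_zero_zero h₁.isHermitian h₂.isHermitian g).symm
      _ ≤ cfc g T := hg.cfc_le_cfc hT (le_fromBlocks_smul_toBlocks hT.posSemidef hr)
  have hcont : Continuous fun r : ℝ => fromBlocks (cfc g ((1 + r ^ 2) • T.toBlocks₁₁)) 0 0
      (0 : Matrix l l ℂ) :=
    ((continuousOn_cfc_smul hg.1 hT₁).comp_continuous (by fun_prop)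
      fun r => Set.mem_Ioi.2 (by positivity)).matrix_fromBlocks
        continuous_const continuous_const continuous_const
  have hlim := (hcont.tendsto' 0 (fromBlocks (cfc g T.toBlocks₁₁) 0 0 0) (by simp)).mono_left
    (nhdsWithin_le_nhds (s := {0}ᶜ))
  have := orderClosedTopology_matrix (k := k ⊕ l)
  exact le_of_tendsto hlim (eventually_mem_nhdsWithin.mono hbound)

theorem OpAntitone.fromBlocks_cfc_smul_add_smul_le (hg : OpAntitone g) {A B : Matrix k k ℂ}
    (hA : A.PosDef) (hB : B.PosDef) {c s : ℝ} (h : c ^ 2 + s ^ 2 = 1) :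
    fromBlocks (cfc g (c ^ 2 • A + s ^ 2 • B)) 0 0 0 ≤
      blockRotation k c s * fromBlocks (cfc g A) 0 0 (cfc g B) * star (blockRotation k c s) := by
  have hU := blockRotation_mem_unitary (k := k) h
  have hAB := posDef_fromBlocks_zero_zero hA hB
  have hT := (Matrix.IsUnit.posDef_star_right_conjugate_iff
    (IsUnit.of_mul_eq_one _ (Unitary.mul_star_self_of_mem hU))).2 hAB
  simpa only [toBlocks₁₁_blockRotation_conjugate, cfc_unitary_conjugate hAB.isHermitian hU,
    cfc_fromBlocks_zero_zero hA.isHermitian hB.isHermitian] using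
    hg.fromBlocks_cfc_toBlocks₁₁_le hT

theorem OpAntitone.cfc_smul_add_smul_le (hg : OpAntitone g) {A B : Matrix k k ℂ}
    (hA : A.PosDef) (hB : B.PosDef) {a b : ℝ} (ha : 0 ≤ a) (hb : 0 ≤ b) (hab : a + b = 1) :
    cfc g (a • A + b • B) ≤ a • cfc g A + b • cfc g B := by
  have h := toBlocks₁₁_mono (hg.fromBlocks_cfc_smul_add_smul_le hA hB (c := √a) (s := √b)
    (by rw [Real.sq_sqrt ha, Real.sq_sqrt hb, hab]))
  rwa [toBlocks_fromBlocks₁₁, toBlocks₁₁_blockRotation_conjugate, Real.sq_sqrt ha,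
    Real.sq_sqrt hb] at h

theorem OpAntitone.smul_cfc_smul_add_smul_le (hg : OpAntitone g) {A B : Matrix k k ℂ}
    (hA : A.PosDef) (hB : B.PosDef) {a b : ℝ} (ha : 0 ≤ a) (hb : 0 ≤ b) (hab : a + b = 1) :
    a • cfc g (a • A + b • B) ≤ cfc g A := by
  have hcs : √a ^ 2 + √b ^ 2 = 1 := by rw [Real.sq_sqrt ha, Real.sq_sqrt hb, hab]
  let U := blockRotation k √a √b
  have hU : U * star U = 1 := Unitary.mul_star_self_of_mem (blockRotation_mem_unitary hcs)
  have hle : fromBlocks (cfc g (a • A + b • B)) 0 0 0 ≤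
      star U * fromBlocks (cfc g A) 0 0 (cfc g B) * star (star U) := by
    simpa [U, star_blockRotation, Real.sq_sqrt, ha, hb] using
      hg.fromBlocks_cfc_smul_add_smul_le hA hB (c := √a) (s := -√b) (by rwa [neg_sq])
  calc a • cfc g (a • A + b • B)
      = (U * fromBlocks (cfc g (a • A + b • B)) 0 0 0 * star U).toBlocks₁₁ := by
        rw [toBlocks₁₁_blockRotation_conjugate, Real.sq_sqrt ha, smul_zero, add_zero]
    _ ≤ (U * (star U * fromBlocks (cfc g A) 0 0 (cfc g B) * star (star U)) * star U).toBlocks₁₁ :=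
        toBlocks₁₁_mono (star_right_conjugate_le_conjugate hle U)
    _ = cfc g A := by
        rw [star_star, ← mul_assoc, ← mul_assoc, hU, one_mul, mul_assoc, hU, mul_one,
          toBlocks_fromBlocks₁₁]

theorem OpAntitone.smul_cfc_smul_le (hg : OpAntitone g) {X : Matrix k k ℂ} (hX : X.PosDef)
    {s : ℝ} (hs : 0 < s) (hs1 : s ≤ 1) : s • cfc g (s • X) ≤ cfc g X := by
  have hlt (t : ℝ) (ht : t ∈ Set.Ioo 0 s) : t • cfc g (s • X) ≤ cfc g X := by
    have ht1 : 0 < 1 - t := by linarith [ht.2]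
    have hst : 0 < s - t := by linarith [ht.2]
    have h := hg.smul_cfc_smul_add_smul_le hX (hX.smul (div_pos hst ht1)) ht.1.le ht1.le
      (add_sub_cancel t 1)
    rwa [smul_smul, mul_div_cancel₀ _ ht1.ne', ← add_smul, add_sub_cancel] at h
  have hlim : Tendsto (fun t : ℝ => t • cfc g (s • X)) (𝓝[<] s) (𝓝 (s • cfc g (s • X))) :=
    ((continuous_id.smul continuous_const).tendsto s).mono_left nhdsWithin_le_nhds
  have := orderClosedTopology_matrix (k := k)
  exact le_of_tendsto hlim (Eventually.mono (Ioo_mem_nhdsLT hs) hlt)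

end OpAntitone

section Kantorovich

variable {k : Type*} [DecidableEq k] {X : Matrix k k ℂ} {m M : ℝ}

theorem posDef_of_smul_one_le [Finite k] (hm : 0 < m) (h : m • (1 : Matrix k k ℂ) ≤ X) :
    X.PosDef :=
  add_sub_cancel (m • (1 : Matrix k k ℂ)) X ▸ (PosDef.one.smul hm).add_posSemidef h

variable [Fintype k]

theorem cfc_mul_add_mul_inv (hX : X.PosDef) (a b : ℝ) :
    cfc (fun x : ℝ => a * x + b * x⁻¹) X = a • X + b • X⁻¹ := by
  have hX' := hX.isHermitian.isSelfAdjoint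
  have hcont (f : ℝ → ℝ) : ContinuousOn f (spectrum ℝ X) := X.finite_real_spectrum.continuousOn f
  have hinv : cfc (fun x : ℝ => x⁻¹) X = X⁻¹ := by
    obtain ⟨u, rfl⟩ := hX.isUnit
    rw [cfc_inv_id u hX', coe_units_inv]
  rw [cfc_add X _ _ (hcont _) (hcont _), cfc_const_mul _ _ X (hcont _),
    cfc_const_mul _ _ X (hcont _), cfc_id' ℝ X hX', hinv]

theorem add_mul_smul_inv_le (hm : 0 < m) (h : m • (1 : Matrix k k ℂ) ≤ X)
    (h' : X ≤ M • (1 : Matrix k k ℂ)) : X + (M * m) • X⁻¹ ≤ (M + m) • (1 : Matrix k k ℂ) := by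
  have hX := posDef_of_smul_one_le hm h
  have hX' := hX.isHermitian.isSelfAdjoint
  rw [← Algebra.algebraMap_eq_smul_one] at h h' ⊢
  have hcfc := cfc_mul_add_mul_inv hX 1 (M * m)
  rw [one_smul] at hcfc
  rw [← hcfc]
  refine cfc_le_algebraMap _ _ X (fun x hx => ?_) (X.finite_real_spectrum.continuousOn _) hX'
  have hmx : m ≤ x := (algebraMap_le_iff_le_spectrum hX').1 h x hx
  have hxM : x ≤ M := (le_algebraMap_iff_spectrum_le hX').1 h' x hx
  have hx : 0 < x := hm.trans_le hmx
  have hgap : M + m - (1 * x + M * m * x⁻¹) = (x - m) * (M - x) / x := by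
    field_simp
    ring
  exact sub_nonneg.1 (hgap ▸ div_nonneg (mul_nonneg (sub_nonneg.2 hmx) (sub_nonneg.2 hxM)) hx.le)

theorem smul_one_le_smul_add_smul_inv (hm : 0 < m) (hM : 0 < M) (hX : X.PosDef) :
    (M + m) • (1 : Matrix k k ℂ) ≤ ((M + m) ^ 2 / (4 * M * m)) • X + (M * m) • X⁻¹ := by
  rw [← cfc_mul_add_mul_inv hX, ← Algebra.algebraMap_eq_smul_one]
  refine algebraMap_le_cfc _ _ X (fun x hx => ?_) (X.finite_real_spectrum.continuousOn _)
    hX.isHermitian.isSelfAdjoint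
  have hx : 0 < x := spectrum_real_subset_Ioi_of_posDef hX hx
  have hgap : (M + m) ^ 2 / (4 * M * m) * x + M * m * x⁻¹ - (M + m) =
      ((M + m) * x - 2 * (M * m)) ^ 2 / (4 * M * m * x) := by
    field_simp
    ring
  exact sub_nonneg.1 (hgap ▸ by positivity)

end Kantorovich

section Means

variable {k : Type} [Fintype k] [DecidableEq k] {A B : Matrix k k ℂ} {m M : ℝ}

theorem posDef_amean (hA : A.PosDef) (hB : B.PosDef) : (amean A B).PosDef :=
  (hA.add hB).smul (by norm_num)

theorem posDef_hmean (hA : A.PosDef) (hB : B.PosDef) : (hmean A B).PosDef :=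
  (posDef_amean hA.inv hB.inv).inv

theorem inv_hmean (hA : A.PosDef) (hB : B.PosDef) : (hmean A B)⁻¹ = amean A⁻¹ B⁻¹ :=
  nonsing_inv_nonsing_inv _ ((isUnit_iff_isUnit_det _).1 (posDef_amean hA.inv hB.inv).isUnit)

theorem amean_le_smul_hmean (hm : 0 < m) (hM : 0 < M)
    (hA : m • (1 : Matrix k k ℂ) ≤ A) (hA' : A ≤ M • (1 : Matrix k k ℂ))
    (hB : m • (1 : Matrix k k ℂ) ≤ B) (hB' : B ≤ M • (1 : Matrix k k ℂ)) :
    amean A B ≤ ((M + m) ^ 2 / (4 * M * m)) • hmean A B := by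
  have hAp := posDef_of_smul_one_le hm hA
  have hBp := posDef_of_smul_one_le hm hB
  refine le_of_add_le_add_right (a := (M * m) • (hmean A B)⁻¹) ?_
  calc amean A B + (M * m) • (hmean A B)⁻¹
      = (2 : ℝ)⁻¹ • ((A + (M * m) • A⁻¹) + (B + (M * m) • B⁻¹)) := by
        rw [inv_hmean hAp hBp, amean, amean]
        module
    _ ≤ (2 : ℝ)⁻¹ • ((M + m) • (1 : Matrix k k ℂ) + (M + m) • (1 : Matrix k k ℂ)) := by
        gcongr
        · exact add_mul_smul_inv_le hm hA hA'
        · exact add_mul_smul_inv_le hm hB hB'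
    _ = (M + m) • (1 : Matrix k k ℂ) := by module
    _ ≤ ((M + m) ^ 2 / (4 * M * m)) • hmean A B + (M * m) • (hmean A B)⁻¹ :=
        smul_one_le_smul_add_smul_inv hm hM (posDef_hmean hAp hBp)

end Means

section Gruss

variable {k : Type} [Fintype k] [DecidableEq k] {g : ℝ → ℝ} {A B : Matrix k k ℂ} {m M : ℝ}

theorem OpAntitone.cfc_amean_le (hg : OpAntitone g) (hA : A.PosDef) (hB : B.PosDef) :
    cfc g (amean A B) ≤ amean (cfc g A) (cfc g B) := by
  simpa only [amean, smul_add] using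
    hg.cfc_smul_add_smul_le hA hB (a := 2⁻¹) (b := 2⁻¹) (by norm_num) (by norm_num) (by norm_num)

theorem OpAntitone.cfc_hmean_le (hg : OpAntitone g) (hm : 0 < m) (hM : 0 < M)
    (hA : m • (1 : Matrix k k ℂ) ≤ A) (hA' : A ≤ M • (1 : Matrix k k ℂ))
    (hB : m • (1 : Matrix k k ℂ) ≤ B) (hB' : B ≤ M • (1 : Matrix k k ℂ)) :
    cfc g (hmean A B) ≤ ((M + m) ^ 2 / (4 * M * m)) • amean (cfc g A) (cfc g B) := by
  have hAp := posDef_of_smul_one_le hm hA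
  have hBp := posDef_of_smul_one_le hm hB
  set K := (M + m) ^ 2 / (4 * M * m) with hK
  have hK0 : 0 < K := by positivity
  have hK1 : 1 ≤ K := by
    rw [hK, one_le_div (by positivity)]
    linarith [sq_nonneg (M - m)]
  have hN : (K⁻¹ • amean A B).PosDef := (posDef_amean hAp hBp).smul (inv_pos.2 hK0)
  calc cfc g (hmean A B)
      ≤ cfc g (K⁻¹ • amean A B) := hg.cfc_le_cfc hN <|
        (inv_smul_le_iff_of_pos hK0).2 (amean_le_smul_hmean hm hM hA hA' hB hB')
    _ ≤ K • cfc g (amean A B) := (inv_smul_le_iff_of_pos hK0).1 <|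
        hg.smul_cfc_smul_le (posDef_amean hAp hBp) (inv_pos.2 hK0) (inv_le_one_of_one_le₀ hK1)
    _ ≤ K • amean (cfc g A) (cfc g B) := by
        gcongr
        exact hg.cfc_amean_le hAp hBp

theorem OpAntitone.cfc_hmean_sub_amean_le (hg : OpAntitone g) (hm : 0 < m) (hM : 0 < M)
    (hA : m • (1 : Matrix k k ℂ) ≤ A) (hA' : A ≤ M • (1 : Matrix k k ℂ))
    (hB : m • (1 : Matrix k k ℂ) ≤ B) (hB' : B ≤ M • (1 : Matrix k k ℂ)) :
    cfc g (hmean A B) - amean (cfc g A) (cfc g B) ≤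
      ((M - m) ^ 2 / (4 * M * m) * g m) • (1 : Matrix k k ℂ) := by
  have hK : (M + m) ^ 2 / (4 * M * m) = (M - m) ^ 2 / (4 * M * m) + 1 := by
    field_simp
    ring
  calc cfc g (hmean A B) - amean (cfc g A) (cfc g B)
      ≤ ((M - m) ^ 2 / (4 * M * m)) • amean (cfc g A) (cfc g B) := by
        rw [sub_le_iff_le_add]
        simpa only [hK, add_smul, one_smul] using hg.cfc_hmean_le hm hM hA hA' hB hB'
    _ ≤ ((M - m) ^ 2 / (4 * M * m)) • amean (g m • 1) (g m • 1) := by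
        unfold amean
        gcongr
        · exact hg.cfc_le_smul_one hm hA
        · exact hg.cfc_le_smul_one hm hB
    _ = ((M - m) ^ 2 / (4 * M * m) * g m) • (1 : Matrix k k ℂ) := by
        unfold amean
        module

theorem gruss_antitone_general {l : Type} [Fintype l] {Φ : Matrix k k ℂ →ₗ[ℝ] Matrix l l ℂ}
    (hΦ : ∀ X : Matrix k k ℂ, X.PosSemidef → (Φ X).PosSemidef) (hg : OpAntitone g)
    (hm : 0 < m) (hM : 0 < M)
    (hA : LoewnerLE (m • (1 : Matrix k k ℂ)) A) (hA' : LoewnerLE A (M • (1 : Matrix k k ℂ)))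
    (hB : LoewnerLE (m • (1 : Matrix k k ℂ)) B) (hB' : LoewnerLE B (M • (1 : Matrix k k ℂ))) :
    LoewnerLE (Φ (cfc g (hmean A B)) - (2 : ℝ)⁻¹ • (Φ (cfc g A) + Φ (cfc g B)))
      (((M - m) ^ 2 / (4 * M * m) * g m) • Φ 1) := by
  have h := hΦ _ (hg.cfc_hmean_sub_amean_le hm hM hA hA' hB hB')
  simpa only [LoewnerLE, amean, map_sub, map_smul, map_add] using h

end Gruss

end

theorem gruss_antitone {ι κ : Type} [Fintype ι] [DecidableEq ι] [Fintype κ] [DecidableEq κ]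
    (Φ : Matrix ι ι ℂ →ₗ[ℂ] Matrix κ κ ℂ)
    (hΦ : ∀ X : Matrix ι ι ℂ, X.PosSemidef → (Φ X).PosSemidef) (hΦ1 : Φ 1 = 1)
    (g : ℝ → ℝ) (hg : OpAntitone g)
    (A B : Matrix ι ι ℂ) (m M : ℝ) (hm : 0 < m) (hmM : m < M)
    (hA1 : LoewnerLE (m • (1 : Matrix ι ι ℂ)) A) (hA2 : LoewnerLE A (M • (1 : Matrix ι ι ℂ)))
    (hB1 : LoewnerLE (m • (1 : Matrix ι ι ℂ)) B) (hB2 : LoewnerLE B (M • (1 : Matrix ι ι ℂ))) :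
    LoewnerLE (Φ (cfc g (hmean A B)) - (2 : ℝ)⁻¹ • (Φ (cfc g A) + Φ (cfc g B)))
      ((((M - m) ^ 2 / (4 * M * m)) * g m) • (1 : Matrix κ κ ℂ)) := by
  have h := gruss_antitone_general (Φ := Φ.restrictScalars ℝ) hΦ hg hm (hm.trans hmM)
    hA1 hA2 hB1 hB2
  simpa only [LinearMap.restrictScalars_apply, hΦ1] using h
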